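/- arXiv:math/0608655 — 3 statements merged into one kernel-verified Lean document; each statement's English description precedes it below -/
import Mathlib

section
/- Let F be a commutative ring, A a commutative F-algebra and n a natural number. Then there exists a commutative F-algebra V together with an F-algebra homomorphism π : A → Mat_n(V) such that for every commutative F-algebra B the map from AlgHom_F(V, B) to AlgHom_F(A, Mat_n(B)) sending ρ to the composite of π with the entrywise application of ρ to matrices is a bijection. -/
universe u

namespace SymmetricProduct

/-- A universal `n`-dimensional representation of the commutative `F`-algebra `A`:
a commutative `F`-algebra `V` together with an `F`-algebra homomorphism
`π : A → Mat_n(V)` such that for every commutative `F`-algebra `B`, the map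
`AlgHom_F(V, B) → AlgHom_F(A, Mat_n(B))`, `ρ ↦ (entrywise ρ) ∘ π`, is a bijection. -/
structure UniversalRep (F : Type u) (A : Type u) [CommRing F] [CommRing A] [Algebra F A]
    (n : ℕ) where
  V : Type u
  [commRing : CommRing V]
  [algebra : Algebra F V]
  π : A →ₐ[F] Matrix (Fin n) (Fin n) V
  universal : ∀ (B : Type u) [CommRing B] [Algebra F B],
    Function.Bijective (fun ρ : V →ₐ[F] B => (AlgHom.mapMatrix ρ).comp π)

/-- The generic matrix attached to `a`. -/
noncomputable def genMat (F : Type u) (A : Type u) [CommRing F] (n : ℕ) (a : A) :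
    Matrix (Fin n) (Fin n) (MvPolynomial (A × Fin n × Fin n) F) :=
  fun i j => MvPolynomial.X (a, i, j)

/-- The relations forcing the generic matrices to define a representation. -/
def relSet (F : Type u) (A : Type u) [CommRing F] [CommRing A] [Algebra F A] (n : ℕ) :
    Set (MvPolynomial (A × Fin n × Fin n) F) :=
  {p | (∃ a b i j, p = (genMat F A n (a * b) - genMat F A n a * genMat F A n b) i j) ∨
    (∃ a b i j, p = (genMat F A n (a + b) - (genMat F A n a + genMat F A n b)) i j) ∨
    (∃ r i j, p = (genMat F A n (algebraMap F A r) - algebraMap F _ r) i j)}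

/-- The coordinate ring of the representation scheme. -/
abbrev RepRing (F : Type u) (A : Type u) [CommRing F] [CommRing A] [Algebra F A] (n : ℕ) :
    Type u :=
  MvPolynomial (A × Fin n × Fin n) F ⧸ Ideal.span (relSet F A n)

/-- The quotient map onto the coordinate ring. -/
noncomputable abbrev repMk (F : Type u) (A : Type u) [CommRing F] [CommRing A] [Algebra F A]
    (n : ℕ) : MvPolynomial (A × Fin n × Fin n) F →ₐ[F] RepRing F A n :=
  Ideal.Quotient.mkₐ F (Ideal.span (relSet F A n))

lemma mapMatrix_eq_of_rel {F : Type u} {A : Type u} [CommRing F] [CommRing A] [Algebra F A]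
    {n : ℕ} {M N : Matrix (Fin n) (Fin n) (MvPolynomial (A × Fin n × Fin n) F)}
    (h : ∀ i j, (M - N) i j ∈ relSet F A n) :
    (repMk F A n).mapMatrix M = (repMk F A n).mapMatrix N := by
  ext i j
  exact Ideal.Quotient.eq.mpr (Ideal.subset_span (h i j))

/-- The universal representation. -/
noncomputable def univRep (F : Type u) (A : Type u) [CommRing F] [CommRing A] [Algebra F A]
    (n : ℕ) : A →ₐ[F] Matrix (Fin n) (Fin n) (RepRing F A n) :=
  have hc : ∀ r : F, (repMk F A n).mapMatrix (genMat F A n (algebraMap F A r)) =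
      algebraMap F _ r := fun r => by
    rw [← AlgHom.commutes (repMk F A n).mapMatrix r]
    exact mapMatrix_eq_of_rel fun i j => Or.inr (Or.inr ⟨r, i, j, rfl⟩)
  { toFun := fun a => (repMk F A n).mapMatrix (genMat F A n a)
    map_one' := by simpa only [map_one] using hc 1
    map_zero' := by simpa only [map_zero] using hc 0
    map_mul' := fun a b => by
      rw [← map_mul]
      exact mapMatrix_eq_of_rel fun i j => Or.inl ⟨a, b, i, j, rfl⟩
    map_add' := fun a b => by
      rw [← map_add]
      exact mapMatrix_eq_of_rel fun i j => Or.inr (Or.inl ⟨a, b, i, j, rfl⟩)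
    commutes' := hc }

lemma univRep_apply (F : Type u) (A : Type u) [CommRing F] [CommRing A] [Algebra F A]
    (n : ℕ) (a : A) (i j : Fin n) :
    univRep F A n a i j = repMk F A n (MvPolynomial.X (a, i, j)) := rfl

lemma univRep_bijective (F : Type u) (A : Type u) [CommRing F] [CommRing A] [Algebra F A]
    (n : ℕ) (B : Type u) [CommRing B] [Algebra F B] :
    Function.Bijective
      (fun ρ : RepRing F A n →ₐ[F] B => (AlgHom.mapMatrix ρ).comp (univRep F A n)) := by
  constructor
  · intro ρ σ h
    apply Ideal.Quotient.algHom_ext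
    apply MvPolynomial.algHom_ext
    rintro ⟨a, i, j⟩
    exact congrFun (congrFun (DFunLike.congr_fun h a) i) j
  · intro φ
    let e : MvPolynomial (A × Fin n × Fin n) F →ₐ[F] B :=
      MvPolynomial.aeval fun x => φ x.1 x.2.1 x.2.2
    have he : ∀ a, e.mapMatrix (genMat F A n a) = φ a := fun a => by
      ext i j
      simp [e, genMat]
    have key : ∀ (M : Matrix (Fin n) (Fin n) (MvPolynomial (A × Fin n × Fin n) F)) (i j : Fin n),
        e (M i j) = e.mapMatrix M i j := fun M i j => rfl
    have hI : ∀ p ∈ Ideal.span (relSet F A n), e p = 0 := by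
      intro p hp
      have hle : Ideal.span (relSet F A n) ≤ RingHom.ker e := by
        rw [Ideal.span_le]
        rintro p (⟨a, b, i, j, rfl⟩ | ⟨a, b, i, j, rfl⟩ | ⟨r, i, j, rfl⟩)
        · change e _ = 0
          rw [key, map_sub, map_mul, he, he, he, map_mul, sub_self]; rfl
        · change e _ = 0
          rw [key, map_sub, map_add, he, he, he, map_add, sub_self]; rfl
        · change e _ = 0
          rw [key, map_sub, he, AlgHom.commutes, AlgHom.commutes, sub_self]; rfl
      exact hle hp
    refine ⟨Ideal.Quotient.liftₐ _ e hI, ?_⟩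
    apply AlgHom.ext
    intro a
    rw [← he a]
    rfl

/-- For every commutative `F`-algebra `A` and every `n`, there exists a commutative
`F`-algebra `V` and a representation `π : A → Mat_n(V)` which is universal among
`n`-dimensional linear representations of `A`. -/
theorem exists_universalRep (F : Type u) (A : Type u) [CommRing F] [CommRing A]
    [Algebra F A] (n : ℕ) :
    Nonempty (UniversalRep F A n) := by
  exact ⟨⟨RepRing F A n, univRep F A n, fun B _ _ => univRep_bijective F A n B⟩⟩

end SymmetricProduct
end

section
/- Let F be a commutative ring and A a commutative F-algebra that is flat as an F-module and is generated as an F-algebra by finitely many elements a_1, …, a_m. Then TS^n_F(A) is generated as an F-algebra by the elements e_i^n(a) for 1 ≤ i ≤ n, where a ranges over the monomials a_1^{α_1}⋯a_m^{α_m} whose nonzero exponents α_1,…,α_m have greatest common divisor 1 and whose total degree satisfies α_1+⋯+α_m ≤ max(n, m(n−1)). -/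
open scoped TensorProduct
open PiTensorProduct

universe u v w

namespace SymmetricProduct

variable (F : Type u) [CommRing F] (A : Type v) [CommRing A] [Algebra F A] (n : ℕ)

/-- The algebra homomorphism on the `n`-fold tensor power permuting factors by `σ`. -/
noncomputable def permHom (σ : Equiv.Perm (Fin n)) :
    (⨂[F] _ : Fin n, A) →ₐ[F] (⨂[F] _ : Fin n, A) :=
  PiTensorProduct.liftAlgHom (MultilinearMap.domDomCongr σ (PiTensorProduct.tprod F))
    (by simp [MultilinearMap.domDomCongr_apply]; rfl)
    (fun x y => by
      simp only [MultilinearMap.domDomCongr_apply]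
      rw [tprod_mul_tprod]; rfl)

@[simp] lemma permHom_tprod (σ : Equiv.Perm (Fin n)) (x : Fin n → A) :
    permHom F A n σ (tprod F x) = tprod F (fun i => x (σ i)) := by
  simp [permHom]

/-- `TS^n_F(A)`: the subalgebra of symmetric tensors in the `n`-fold tensor power of `A`. -/
noncomputable def TS : Subalgebra F (⨂[F] _ : Fin n, A) where
  carrier := {x | ∀ σ : Equiv.Perm (Fin n), permHom F A n σ x = x}
  mul_mem' := fun hx hy σ => by rw [_root_.map_mul, hx σ, hy σ]
  add_mem' := fun hx hy σ => by rw [_root_.map_add, hx σ, hy σ]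
  one_mem' := fun σ => map_one _
  algebraMap_mem' := fun r σ => AlgHom.commutes _ r

/-- `e_i^n(a)`: the sum over `i`-element subsets `S` of `Fin n` of the elementary tensors
having `a` in the slots of `S` and `1` elsewhere. -/
noncomputable def esym (i : ℕ) (a : A) : ⨂[F] _ : Fin n, A :=
  ∑ S ∈ Finset.powersetCard i (Finset.univ : Finset (Fin n)),
    tprod F (fun j => if j ∈ S then a else 1)

lemma esym_mem (i : ℕ) (a : A) : esym F A n i a ∈ TS F A n := by
  intro σ
  rw [esym, map_sum]
  simp only [permHom_tprod]
  refine Finset.sum_nbij' (fun S => S.map σ.symm.toEmbedding)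
    (fun S => S.map σ.toEmbedding) ?_ ?_ ?_ ?_ ?_
  · intro S hS
    simp only [Finset.mem_powersetCard_univ, Finset.card_map] at hS ⊢
    exact hS
  · intro S hS
    simp only [Finset.mem_powersetCard_univ, Finset.card_map] at hS ⊢
    exact hS
  · intro S hS
    ext j
    simp
  · intro S hS
    ext j
    simp
  · intro S hS
    congr 1
    funext j
    have hiff : (σ j ∈ S) ↔ (j ∈ Finset.map σ.symm.toEmbedding S) := by
      constructor
      · intro h
        exact Finset.mem_map.2 ⟨σ j, h, σ.symm_apply_apply j⟩
      · intro h
        obtain ⟨s, hs, rfl⟩ := Finset.mem_map.1 h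
        simpa using hs
    simp only [hiff]

/-- `e_i^n(a)` as an element of `TS^n_F(A)`. -/
noncomputable def esymT (i : ℕ) (a : A) : TS F A n := ⟨esym F A n i a, esym_mem F A n i a⟩

lemma tprod_const_mem (a : A) : (tprod F (fun _ : Fin n => a)) ∈ TS F A n := fun σ => by
  simp

/-- `a^{⊗ n}` as an element of `TS^n_F(A)`. -/
noncomputable def tpow (a : A) : TS F A n := ⟨tprod F (fun _ : Fin n => a), tprod_const_mem F A n a⟩


section Flatness

/-- split off the first tensor factor -/
noncomputable def splitMap (n : ℕ) :
    (⨂[F] _ : Fin (n+1), A) →ₗ[F] ((⨂[F] _ : Fin n, A) ⊗[F] A) :=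
  PiTensorProduct.lift (LinearMap.uncurryLeft (M := fun _ : Fin (n+1) => A)
    { toFun := fun x => ((TensorProduct.mk F (⨂[F] _ : Fin n, A) A).flip x).compMultilinearMap
        (tprod F)
      map_add' := fun x y => by ext; simp
      map_smul' := fun r x => by ext; simp })

lemma splitMap_tprod (f : Fin (n+1) → A) :
    splitMap F A n (tprod F f) = (tprod F (fun k => f k.succ)) ⊗ₜ f 0 := by
  simp [splitMap]; rfl

lemma sum_rev4 {Q I J K L : Type*} [AddCommMonoid Q] [Fintype I] [Fintype J] [Fintype K] [Fintype L]
    (X : I → J → K → L → Q) :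
    ∑ i, ∑ j, ∑ k, ∑ l, X i j k l = ∑ l, ∑ k, ∑ j, ∑ i, X i j k l := by
  have h3 : ∀ l, ∑ i, ∑ j, ∑ k, X i j k l = ∑ k, ∑ j, ∑ i, X i j k l := by
    intro l
    rw [Finset.sum_comm]
    trans ∑ j, ∑ k, ∑ i, X i j k l
    · exact Finset.sum_congr rfl fun j _ => Finset.sum_comm
    · exact Finset.sum_comm
  simp only [← h3]
  symm
  rw [Finset.sum_comm]
  refine Finset.sum_congr rfl fun i _ => ?_
  rw [Finset.sum_comm]
  refine Finset.sum_congr rfl fun j _ => ?_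
  rw [Finset.sum_comm]

lemma flat_vanish [Module.Flat F A] : ∀ (n : ℕ) (Q : Type w) [AddCommGroup Q] [Module F Q] (N : ℕ)
    (a : Fin N → A) (c : (Fin n → Fin N) → Q),
    ∑ f, c f ⊗ₜ[F] tprod F (fun k => a (f k)) = 0 →
    ∃ (K : ℕ) (B : Fin N → Fin K → F) (b : Fin K → A),
      (∀ i, a i = ∑ j, B i j • b j) ∧
      ∀ g : Fin n → Fin K, ∑ f : Fin n → Fin N, (∏ k, B (f k) (g k)) • c f = 0 := by
  intro n
  induction n with
  | zero =>
    intro Q _ _ N a c h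
    refine ⟨N, fun i j => if i = j then 1 else 0, a, fun i => by simp, fun g => ?_⟩
    have h2 := congrArg (fun t => TensorProduct.rid F Q
      (LinearMap.lTensor Q (isEmptyEquiv (R := F) (s := fun _ => A) (Fin 0)).toLinearMap t)) h
    simpa using h2
  | succ n ih =>
    intro Q _ _ N a c h
    have h2 := congrArg (fun t => (TensorProduct.assoc F Q (⨂[F] _ : Fin n, A) A).symm
      (LinearMap.lTensor Q (splitMap F A n) t)) h
    simp only [map_sum, LinearMap.lTensor_tmul, splitMap_tprod, TensorProduct.assoc_symm_tmul,
      map_zero] at h2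
    rw [← (Fin.consEquiv (fun _ : Fin (n+1) => Fin N)).sum_comp, Fintype.sum_prod_type] at h2
    simp only [Fin.consEquiv_apply, Fin.cons_succ, Fin.cons_zero, ← TensorProduct.sum_tmul] at h2
    have h3 := TensorProduct.vanishesTrivially_of_sum_tmul_eq_zero_of_rTensor_injective F
      (Module.Flat.rTensor_preserves_injective_linearMap _ (Submodule.injective_subtype _)) h2
    obtain ⟨K, B, b, hB, hb⟩ := h3
    -- new coefficients
    let c' : (Fin n → Fin K) → (Fin K → Q) := fun g j =>
      ∑ f : Fin n → Fin N, (∏ k, B (f k) (g k)) • ∑ i, B i j • c (Fin.cons i f)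
    have h4 : ∑ g, c' g ⊗ₜ[F] tprod F (fun k => b (g k)) = 0 := by
      have h5 : ∀ j, ∑ g : Fin n → Fin K, (c' g j) ⊗ₜ[F] tprod F (fun k => b (g k)) = 0 := by
        intro j
        have ht : ∀ f : Fin n → Fin N, tprod F (fun k => a (f k)) =
            ∑ g : Fin n → Fin K, (∏ k, B (f k) (g k)) • tprod F (fun k => b (g k)) := by
          intro f
          simp only [hB, MultilinearMap.map_sum, MultilinearMap.map_smul_univ]
        have hX : ∑ f : Fin n → Fin N, (∑ i, B i j • c (Fin.cons i f)) ⊗ₜ[F]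
            tprod F (fun k => a (f k)) = 0 := by
          rw [← hb j]
          simp only [TensorProduct.sum_tmul, Finset.smul_sum, TensorProduct.smul_tmul']
          rw [Finset.sum_comm]
          rfl
        rw [← hX]
        simp only [ht, c', TensorProduct.tmul_sum, TensorProduct.tmul_smul]
        rw [Finset.sum_comm]
        refine Finset.sum_congr rfl fun g _ => ?_
        rw [TensorProduct.sum_tmul]
        rfl
      have h6 : ∀ g, c' g = ∑ j, LinearMap.single F (fun _ => Q) j (c' g j) := by
        intro g; simp [LinearMap.sum_single_apply]
      calc _ = ∑ j, LinearMap.rTensor _ (LinearMap.single F (fun _ : Fin K => Q) j) 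
                (∑ g : Fin n → Fin K, (c' g j) ⊗ₜ[F] tprod F (fun k => b (g k))) := by
            simp only [map_sum, LinearMap.rTensor_tmul]
            rw [Finset.sum_comm]
            refine Finset.sum_congr rfl fun g _ => ?_
            rw [← TensorProduct.sum_tmul, ← h6]
        _ = 0 := by simp [h5]
    obtain ⟨L, C, d, hC, hd⟩ := ih (Fin K → Q) K b c' h4
    refine ⟨L, fun i l => ∑ j, B i j * C j l, d, fun i => ?_, fun h => ?_⟩
    · rw [hB]
      simp only [hC, Finset.smul_sum, Finset.sum_smul, mul_smul]
      rw [Finset.sum_comm]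
    · rw [← (Fin.consEquiv (fun _ : Fin (n+1) => Fin N)).sum_comp, Fintype.sum_prod_type]
      simp only [Fin.consEquiv_apply, Fin.prod_univ_succ, Fin.cons_succ, Fin.cons_zero]
      have h7 := fun j => congrFun (hd (fun k => h k.succ)) j
      simp only [Finset.sum_apply, Pi.smul_apply, c', Pi.zero_apply] at h7
      have h8 : ∑ j, C j (h 0) • (∑ g : Fin n → Fin K, (∏ k, C (g k) (h k.succ)) •
        ∑ f : Fin n → Fin N, (∏ k, B (f k) (g k)) • ∑ i, B i j • c (Fin.cons i f)) = 0 := by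
        simp [h7]
      rw [← h8]
      simp only [Finset.prod_univ_sum, Finset.sum_mul, Finset.mul_sum, Finset.sum_smul,
        Finset.smul_sum, Fintype.piFinset_univ, smul_smul, Finset.prod_mul_distrib]
      rw [sum_rev4]
      refine Finset.sum_congr rfl fun j _ => Finset.sum_congr rfl fun g _ =>
        Finset.sum_congr rfl fun f _ => Finset.sum_congr rfl fun i _ => ?_
      simp only [Fin.consEquiv, Equiv.coe_fn_mk]
      congr 1
      ring

/-- The expansion of a symmetric tensor with symmetric coefficients. -/
lemma exists_symm_expansion [Module.Flat F A] (x : ⨂[F] _ : Fin n, A) (hx : x ∈ TS F A n) :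
    ∃ (K : ℕ) (b : Fin K → A) (c : (Fin n → Fin K) → F),
      (∀ (σ : Equiv.Perm (Fin n)) g, c (fun k => g (σ k)) = c g) ∧
      x = ∑ g, c g • tprod F (fun k => b (g k)) := by
  classical
  obtain ⟨N, a, c, hc⟩ : ∃ (N : ℕ) (a : Fin N → A) (c : (Fin n → Fin N) → F),
      x = ∑ g, c g • tprod F (fun k => a (g k)) := by
    have h1 : x ∈ Submodule.span F (Set.range (tprod F (s := fun _ : Fin n => A))) := by
      rw [span_tprod_eq_top]; trivial
    obtain ⟨c, hc⟩ := Finsupp.mem_span_range_iff_exists_finsupp.1 h1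
    let s : Finset A := c.support.biUnion fun f => Finset.univ.image f
    let e := s.equivFin.symm
    refine ⟨s.card, fun i => (e i : A), fun g => c (fun k => (e (g k) : A)), ?_⟩
    rw [← hc, Finsupp.sum]
    symm
    refine Finset.sum_bij_ne_zero (fun g _ _ => fun k => (e (g k) : A)) ?_ ?_ ?_ ?_
    · intro g _ h
      rw [Finsupp.mem_support_iff]
      intro h0
      simp [h0] at h
    · intro g _ _ g' _ _ h
      funext k
      exact e.injective (Subtype.ext (congrFun h k))
    · intro f hf h
      have hm : ∀ k, f k ∈ s := fun k =>
        Finset.mem_biUnion.2 ⟨f, hf, Finset.mem_image_of_mem _ (Finset.mem_univ k)⟩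
      refine ⟨fun k => e.symm ⟨f k, hm k⟩, Finset.mem_univ _, ?_, ?_⟩
      · simpa using h
      · simp
    · intro g _ _
      rfl
  have h1 : ∑ f, (fun σ : Equiv.Perm (Fin n) => c (fun k => f (σ k)) - c f) ⊗ₜ[F]
      tprod F (fun k => a (f k)) = 0 := by
    have h5 : ∀ σ : Equiv.Perm (Fin n), ∑ f : Fin n → Fin N, (c (fun k => f (σ k)) - c f) ⊗ₜ[F]
        tprod F (fun k => a (f k)) = 0 := by
      intro σ
      apply (TensorProduct.lid F _).injective
      have h6 := hx σ.symm
      rw [hc] at h6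
      simp only [map_sum, map_smul, permHom_tprod] at h6
      simp only [map_sum, TensorProduct.lid_tmul, sub_smul, Finset.sum_sub_distrib, map_zero]
      rw [← h6, sub_eq_zero]
      refine Fintype.sum_equiv (Equiv.arrowCongr σ.symm (Equiv.refl (Fin N))) _ _ ?_
      intro f
      simp [Equiv.arrowCongr, Function.comp_def]
    have h6 : ∀ f : Fin n → Fin N, (fun σ : Equiv.Perm (Fin n) => c (fun k => f (σ k)) - c f) =
        ∑ σ, LinearMap.single F (fun _ => F) σ (c (fun k => f (σ k)) - c f) := by
      intro f
      ext σ
      simp [Pi.single_apply]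
    calc _ = ∑ σ, LinearMap.rTensor _ (LinearMap.single F (fun _ : Equiv.Perm (Fin n) => F) σ)
              (∑ f : Fin n → Fin N, (c (fun k => f (σ k)) - c f) ⊗ₜ[F]
                tprod F (fun k => a (f k))) := by
          simp only [map_sum, LinearMap.rTensor_tmul]
          rw [Finset.sum_comm]
          refine Finset.sum_congr rfl fun f _ => ?_
          rw [← TensorProduct.sum_tmul, ← h6]
      _ = 0 := by simp only [h5]; simp
  obtain ⟨K, B, b, hB, hg⟩ := flat_vanish F A n _ N a _ h1
  refine ⟨K, b, fun g => ∑ f, (∏ k, B (f k) (g k)) * c f, ?_, ?_⟩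
  · intro σ g
    have h2 := congrFun (hg g) σ
    simp only [Finset.sum_apply, Pi.smul_apply, Pi.zero_apply, smul_eq_mul, mul_sub,
      Finset.sum_sub_distrib, sub_eq_zero] at h2
    beta_reduce
    rw [← h2]
    refine Fintype.sum_equiv (Equiv.arrowCongr σ (Equiv.refl (Fin N))) _ _ ?_
    intro f
    simp only [Equiv.arrowCongr_apply, Function.comp_def, Equiv.refl_apply, Equiv.symm_apply_apply]
    congr 1
    rw [← Equiv.prod_comp σ (fun x => B (f (σ.symm x)) (g x))]
    simp
  · rw [hc]
    simp only [hB, MultilinearMap.map_sum, MultilinearMap.map_smul_univ, Finset.smul_sum,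
      Finset.sum_smul]
    rw [Finset.sum_comm]
    refine Finset.sum_congr rfl fun g _ => Finset.sum_congr rfl fun f _ => ?_
    rw [smul_smul, mul_comm]

end Flatness
section Comb

variable {n} {m : ℕ} (a : Fin m → A)

/-- The monomial with exponent vector `α`. -/
noncomputable def mon (α : Fin m → ℕ) : A := ∏ j, a j ^ α j

lemma mon_add (α β : Fin m → ℕ) : mon A a (α + β) = mon A a α * mon A a β := by
  simp [mon, pow_add, Finset.prod_mul_distrib]

lemma mon_zero : mon A a 0 = 1 := by simp [mon]

lemma mon_smul (d : ℕ) (α : Fin m → ℕ) : mon A a (d • α) = mon A a α ^ d := by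
  simp only [mon, Pi.smul_apply, smul_eq_mul, ← Finset.prod_pow]
  refine Finset.prod_congr rfl fun j _ => ?_
  rw [← pow_mul, mul_comm]

/-- The elementary tensor of monomials. -/
noncomputable def tau (g : Fin n → Fin m → ℕ) : ⨂[F] _ : Fin n, A :=
  tprod F (fun k => mon A a (g k))

lemma tau_add (g h : Fin n → Fin m → ℕ) : tau F A a (g + h) = tau F A a g * tau F A a h := by
  rw [tau, tau, tau, tprod_mul_tprod]
  congr 1
  funext k
  exact mon_add A a _ _

/-- The orbit under permutation of slots. -/
def orb {Y : Type*} [DecidableEq Y] (g : Fin n → Y) : Finset (Fin n → Y) :=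
  Finset.univ.image fun (σ : Equiv.Perm (Fin n)) => fun k => g (σ k)

lemma mem_orb {Y : Type*} [DecidableEq Y] {g h : Fin n → Y} :
    h ∈ orb g ↔ ∃ σ : Equiv.Perm (Fin n), h = fun k => g (σ k) := by
  simp [orb, eq_comm]

lemma mem_orb_iff {Y : Type*} [DecidableEq Y] {g h : Fin n → Y} :
    h ∈ orb g ↔ ∀ y, (Finset.univ.filter fun k => h k = y).card =
      (Finset.univ.filter fun k => g k = y).card := by
  rw [mem_orb]
  constructor
  · rintro ⟨σ, rfl⟩ y
    refine Finset.card_bij (fun k _ => σ k) ?_ ?_ ?_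
    · intro k hk; simpa using hk
    · intro k _ l _ h; exact σ.injective h
    · intro k hk
      exact ⟨σ.symm k, by simpa using hk, by simp⟩
  · intro H
    have e : ∀ y, Nonempty ({k // h k = y} ≃ {k // g k = y}) := by
      intro y
      refine ⟨Fintype.equivOfCardEq ?_⟩
      rw [Fintype.card_subtype, Fintype.card_subtype, H]
    let e' := fun y => (e y).some
    refine ⟨Equiv.ofFiberEquiv e', ?_⟩
    funext k
    exact (Equiv.ofFiberEquiv_map e' k).symm

lemma self_mem_orb {Y : Type*} [DecidableEq Y] (g : Fin n → Y) : g ∈ orb g :=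
  mem_orb.2 ⟨1, rfl⟩

lemma perm_mem_orb {Y : Type*} [DecidableEq Y] {g h : Fin n → Y} (σ : Equiv.Perm (Fin n))
    (hh : h ∈ orb g) : (fun k => h (σ k)) ∈ orb g := by
  obtain ⟨τ, rfl⟩ := mem_orb.1 hh
  exact mem_orb.2 ⟨σ.trans τ, rfl⟩

/-- The orbit sum. -/
noncomputable def osum (g : Fin n → Fin m → ℕ) : ⨂[F] _ : Fin n, A :=
  ∑ h ∈ orb g, tau F A a h

/-- Sums over stable finsets with invariant coefficients. -/
lemma sum_stable_mem (R : Subalgebra F (⨂[F] _ : Fin n, A)) :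
    ∀ (N : ℕ) (s : Finset (Fin n → Fin m → ℕ)) (C : (Fin n → Fin m → ℕ) → ⨂[F] _ : Fin n, A),
    s.card ≤ N →
    (∀ h ∈ s, ∀ σ : Equiv.Perm (Fin n), (fun k => h (σ k)) ∈ s) →
    (∀ h ∈ s, ∀ σ : Equiv.Perm (Fin n), C (fun k => h (σ k)) = C h) →
    (∀ h ∈ s, C h ∈ R) → (∀ h ∈ s, osum F A a h ∈ R) →
    ∑ h ∈ s, C h * tau F A a h ∈ R := by
  intro N
  induction N with
  | zero =>
    intro s C hs _ _ _ _
    have : s = ∅ := by simpa using hs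
    subst this
    simp
  | succ N ih =>
    intro s C hN hs hC hCR ho
    rcases s.eq_empty_or_nonempty with rfl | ⟨g, hg⟩
    · simp
    have hsub : orb g ⊆ s := by
      intro h hh
      obtain ⟨σ, rfl⟩ := mem_orb.1 hh
      exact hs g hg σ
    rw [← Finset.sum_sdiff hsub]
    refine add_mem (ih _ C ?_ ?_ ?_ ?_ ?_) ?_
    · have h1 : (s \ orb g).card < s.card := by
        refine Finset.card_lt_card (Finset.sdiff_ssubset hsub ⟨g, self_mem_orb g⟩)
      omega
    · intro h hh σ
      rw [Finset.mem_sdiff] at hh ⊢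
      refine ⟨hs h hh.1 σ, fun h2 => hh.2 ?_⟩
      simpa using perm_mem_orb σ.symm h2
    · intro h hh; exact hC h (Finset.mem_sdiff.1 hh).1
    · intro h hh; exact hCR h (Finset.mem_sdiff.1 hh).1
    · intro h hh; exact ho h (Finset.mem_sdiff.1 hh).1
    · have : ∑ h ∈ orb g, C h * tau F A a h = C g * osum F A a g := by
        rw [osum, Finset.mul_sum]
        refine Finset.sum_congr rfl fun h hh => ?_
        obtain ⟨σ, rfl⟩ := mem_orb.1 hh
        rw [hC g hg σ]
      rw [this]
      exact mul_mem (hCR g hg) (ho g hg)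

/-- Sums over sets with an action, mapping equivariantly to exponent vectors. -/
lemma sum_equivariant_mem (R : Subalgebra F (⨂[F] _ : Fin n, A)) {X : Type*}
    (s : Finset X) (act : Equiv.Perm (Fin n) → X → X)
    (hact : ∀ σ x, act σ (act σ.symm x) = x)
    (γ : X → Fin n → Fin m → ℕ) (hγ : ∀ σ x, γ (act σ x) = fun k => γ x (σ k))
    (C : X → ⨂[F] _ : Fin n, A)
    (hs : ∀ x ∈ s, ∀ σ, act σ x ∈ s) (hC : ∀ x ∈ s, ∀ σ, C (act σ x) = C x)
    (hCR : ∀ x ∈ s, C x ∈ R) (ho : ∀ x ∈ s, osum F A a (γ x) ∈ R) :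
    ∑ x ∈ s, C x * tau F A a (γ x) ∈ R := by
  classical
  have h1 : ∑ x ∈ s, C x * tau F A a (γ x) =
      ∑ h ∈ s.image γ, (∑ x ∈ s with γ x = h, C x) * tau F A a h := by
    rw [← Finset.sum_fiberwise_of_maps_to (g := γ) (t := s.image γ)
      (fun x hx => Finset.mem_image_of_mem _ hx)]
    refine Finset.sum_congr rfl fun h _ => ?_
    rw [Finset.sum_mul]
    refine Finset.sum_congr rfl fun x hx => ?_
    rw [(Finset.mem_filter.1 hx).2]
  rw [h1]
  refine sum_stable_mem F A a R _ _ _ le_rfl ?_ ?_ ?_ ?_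
  · intro h hh σ
    obtain ⟨x, hx, rfl⟩ := Finset.mem_image.1 hh
    exact Finset.mem_image.2 ⟨act σ x, hs x hx σ, hγ σ x⟩
  · intro h _ σ
    refine Finset.sum_nbij' (act σ.symm) (act σ) ?_ ?_ ?_ ?_ ?_
    · intro x hx
      rw [Finset.mem_filter] at hx ⊢
      refine ⟨hs x hx.1 _, ?_⟩
      rw [hγ, hx.2]
      simp
    · intro x hx
      rw [Finset.mem_filter] at hx ⊢
      refine ⟨hs x hx.1 _, ?_⟩
      rw [hγ, hx.2]
    · intro x _; exact hact σ x
    · intro x _; simpa using hact σ.symm x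
    · intro x hx
      rw [Finset.mem_filter] at hx
      exact (hC x hx.1 _).symm
  · intro h _
    exact sum_mem fun x hx => hCR x (Finset.mem_filter.1 hx).1
  · intro h hh
    obtain ⟨x, hx, rfl⟩ := Finset.mem_image.1 hh
    exact ho x hx

/-- The inclusion of `A` in the `k`-th slot. -/
noncomputable def slot (k : Fin n) : A →ₐ[F] ⨂[F] _ : Fin n, A :=
  singleAlgHom (R := F) (A := fun _ : Fin n => A) k

lemma slot_apply (k : Fin n) (x : A) : slot F A k x = tprod F (Pi.mulSingle (M := fun _ : Fin n => A) k x) := rfl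

lemma tprod_eq_prod_single (f : Fin n → A) :
    tprod F f = ∏ k, slot F A k (f k) := by
  classical
  have h : ∀ s : Finset (Fin n), ∏ k ∈ s, slot F A k (f k) =
      tprod F (fun k => if k ∈ s then f k else 1) := by
    intro s
    induction s using Finset.induction_on with
    | empty => simp; rfl
    | insert k s hk ih =>
      rw [Finset.prod_insert hk, ih, slot_apply, tprod_mul_tprod]
      congr 1
      funext l
      by_cases hl : l = k
      · subst hl; simp [hk]
      · simp [hl]
  rw [h]; simp

lemma esym_eq_sum_prod (i : ℕ) (x : A) :
    esym F A n i x = ∑ S ∈ Finset.powersetCard i (Finset.univ : Finset (Fin n)),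
      ∏ k ∈ S, slot F A k x := by
  rw [esym]
  refine Finset.sum_congr rfl fun S _ => ?_
  rw [tprod_eq_prod_single]
  rw [← Finset.prod_subset (Finset.subset_univ S)]
  · exact Finset.prod_congr rfl fun k hk => by simp [hk]
  · intro k _ hk; simp [hk]

lemma esym_eq_aeval (i : ℕ) (x : A) :
    esym F A n i x = MvPolynomial.aeval
      (fun k => slot F A k x)
      (MvPolynomial.esymm (Fin n) F i) := by
  rw [esym_eq_sum_prod, MvPolynomial.esymm]
  simp

lemma esym_pow_mem (R : Subalgebra F (⨂[F] _ : Fin n, A)) (x : A)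
    (hx : ∀ i, 1 ≤ i → i ≤ n → esym F A n i x ∈ R) (d i : ℕ) :
    esym F A n i (x ^ d) ∈ R := by
  have h1 : esym F A n i (x ^ d) = MvPolynomial.aeval
      (fun k => slot F A k x)
      (MvPolynomial.expand d (MvPolynomial.esymm (Fin n) F i)) := by
    rw [esym_eq_aeval, MvPolynomial.expand, MvPolynomial.aeval_bind₁]
    simp
  have hs : (MvPolynomial.expand d (MvPolynomial.esymm (Fin n) F i)).IsSymmetric := by
    intro e
    rw [MvPolynomial.rename_expand, MvPolynomial.esymm_isSymmetric]
  obtain ⟨q, hq⟩ := MvPolynomial.esymmAlgHom_surjective (σ := Fin n) F (n := n) (by simp) ⟨_, hs⟩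
  have hq2 := congrArg Subtype.val hq
  rw [MvPolynomial.esymmAlgHom_apply] at hq2
  rw [h1]
  simp only at hq2
  rw [← hq2, MvPolynomial.aeval_def, ← MvPolynomial.aeval_def]
  rw [← AlgHom.comp_apply, MvPolynomial.comp_aeval]
  simp only [← esym_eq_aeval]
  have h2 : MvPolynomial.aeval (fun l : Fin n => esym F A n (l + 1) x) q ∈
      Algebra.adjoin F (Set.range fun l : Fin n => esym F A n (l + 1) x) := by
    rw [Algebra.adjoin_range_eq_range_aeval]
    exact ⟨q, rfl⟩
  refine (Algebra.adjoin_le ?_) h2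
  rintro _ ⟨l, rfl⟩
  exact hx _ (by omega) (by omega)

lemma single_pow_eq (k : Fin n) (x : A) :
    slot F A k x ^ n =
      ∑ l : Fin n, ((-1) ^ (n - (l : ℕ) + 1) * esym F A n (n - l) x) *
        slot F A k x ^ (l : ℕ) := by
  let r : Fin n → ⨂[F] _ : Fin n, A := fun k => slot F A k x
  have h := congrArg (Polynomial.eval (r k))
    (Multiset.prod_X_sub_X_eq_sum_esymm ((Finset.univ : Finset (Fin n)).val.map r))
  have he : ∀ i, ((Finset.univ : Finset (Fin n)).val.map r).esymm i = esym F A n i x := by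
    intro i
    rw [esym_eq_sum_prod, Finset.esymm_map_val]
  have h0 : Polynomial.eval (r k) (Multiset.map (fun t => Polynomial.X - Polynomial.C t)
      ((Finset.univ : Finset (Fin n)).val.map r)).prod = 0 := by
    rw [Multiset.map_map]
    change Polynomial.eval (r k) (∏ l, (Polynomial.X - Polynomial.C (r l))) = 0
    rw [Polynomial.eval_prod]
    exact Finset.prod_eq_zero (Finset.mem_univ k) (by simp)
  rw [h0] at h
  simp only [he, Multiset.card_map, Finset.card_val, Finset.card_univ, Fintype.card_fin,
    Polynomial.eval_finsetSum, Polynomial.eval_mul, Polynomial.eval_pow, Polynomial.eval_neg,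
    Polynomial.eval_one, Polynomial.eval_C, Polynomial.eval_X] at h
  rw [← Finset.sum_range_reflect, Finset.sum_range_succ] at h
  have h00 : esym F A n 0 x = 1 := by rw [esym_eq_sum_prod]; simp
  rw [Finset.sum_range] at h
  simp only [Nat.add_sub_cancel, Nat.sub_self, h00, pow_zero, one_mul, Nat.sub_zero] at h
  change r k ^ n = ∑ l : Fin n, _ * r k ^ (l : ℕ)
  rw [eq_comm, add_eq_zero_iff_eq_neg', ← Finset.sum_neg_distrib] at h
  rw [h]
  refine Finset.sum_congr rfl fun l _ => ?_
  have : n - (n - (l : ℕ)) = l := by omega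
  rw [this]
  ring

/-- Degree of an exponent vector. -/
def dg (α : Fin m → ℕ) : ℕ := ∑ j, α j

lemma dg_add (α β : Fin m → ℕ) : dg (α + β) = dg α + dg β := by
  simp [dg, Finset.sum_add_distrib]

lemma dg_zero : dg (0 : Fin m → ℕ) = 0 := by simp [dg]

lemma dg_pos {α : Fin m → ℕ} (h : α ≠ 0) : 0 < dg α := by
  rw [Nat.pos_iff_ne_zero]
  intro h0
  apply h
  funext j
  simpa using (Finset.sum_eq_zero_iff.1 h0) j (Finset.mem_univ j)

/-- Degree of a tuple of exponent vectors. -/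
def DG (g : Fin n → Fin m → ℕ) : ℕ := ∑ k, dg (g k)

lemma esym_reduce (R : Subalgebra F (⨂[F] _ : Fin n, A)) (i : ℕ) (hi : 1 ≤ i) (w : Fin m → ℕ)
    (j : Fin m) (hj : n ≤ w j) (hR : ∀ l, 1 ≤ l → l ≤ n → esym F A n l (a j) ∈ R)
    (ih : ∀ h : Fin n → Fin m → ℕ, DG h < i * dg w → osum F A a h ∈ R) :
    esym F A n i (mon A a w) ∈ R := by
  classical
  obtain ⟨w', rfl⟩ : ∃ w' : Fin m → ℕ, w = (Pi.single j n : Fin m → ℕ) + w' := by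
    refine ⟨w - Pi.single j n, ?_⟩
    funext l
    by_cases hl : l = j
    · subst hl; simp; omega
    · simp [hl]
  let ws : ℕ → Fin m → ℕ := fun l => Pi.single j l + w'
  have hmon : ∀ l, mon A a (ws l) = a j ^ l * mon A a w' := by
    intro l
    rw [mon_add]
    congr 1
    rw [mon, Finset.prod_eq_single j]
    · simp
    · intro b _ hb; simp [hb]
    · simp
  let E : Fin n → ⨂[F] _ : Fin n, A := fun l => (-1) ^ (n - (l : ℕ) + 1) * esym F A n (n - l) (a j)
  have hE : ∀ l, E l ∈ R := fun l =>
    mul_mem (pow_mem (neg_mem (one_mem R)) _) (hR _ (by omega) (by omega))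
  have hslot : ∀ k : Fin n, slot F A k (mon A a (ws n)) =
      ∑ l : Fin n, E l * slot F A k (mon A a (ws l)) := by
    intro k
    simp only [hmon, map_mul, map_pow]
    rw [single_pow_eq, Finset.sum_mul]
    refine Finset.sum_congr rfl fun l _ => ?_
    rw [mul_assoc]
  let γ : (Fin n → Option (Fin n)) → Fin n → Fin m → ℕ :=
    fun y k => (y k).elim 0 (fun l => ws l)
  let C : (Fin n → Option (Fin n)) → ⨂[F] _ : Fin n, A := fun y => ∏ k, (y k).elim 1 E
  let supp : (Fin n → Option (Fin n)) → Finset (Fin n) :=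
    fun y => Finset.univ.filter fun k => (y k).isSome
  have key : esym F A n i (mon A a (ws n)) =
      ∑ y with (supp y).card = i, C y * tau F A a (γ y) := by
    rw [esym_eq_sum_prod]
    rw [← Finset.sum_fiberwise_of_maps_to (g := supp)
      (t := Finset.powersetCard i (Finset.univ : Finset (Fin n)))
      (fun y hy => by simpa using hy)]
    refine Finset.sum_congr rfl fun S hS => ?_
    let t : Fin n → Finset (Option (Fin n)) :=
      fun k => if k ∈ S then Finset.univ.map Function.Embedding.some else {none}
    have h1 : ∏ k ∈ S, slot F A k (mon A a (ws n)) =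
        ∏ k, ∑ o ∈ t k, o.elim 1 (fun l => E l *
          slot F A k (mon A a (ws l))) := by
      rw [← Finset.prod_subset (Finset.subset_univ S)]
      · refine Finset.prod_congr rfl fun k hk => ?_
        simp [t, hk, hslot]
      · intro k _ hk; simp [t, hk]
    rw [h1, Finset.prod_univ_sum]
    refine Finset.sum_congr ?_ ?_
    · ext y
      rw [Finset.mem_powersetCard] at hS
      simp only [Fintype.mem_piFinset, Finset.mem_filter, Finset.mem_univ, true_and, supp, t]
      constructor
      · intro h
        have h2 : (Finset.univ.filter fun k => (y k).isSome) = S := by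
          ext k
          have := h k
          by_cases hk : k ∈ S
          · simp only [hk, if_true, Finset.mem_map, Finset.mem_univ, true_and] at this
            obtain ⟨l, hl⟩ := this
            simp [hk, ← hl]
          · simp only [hk, if_false, Finset.mem_singleton] at this
            simp [hk, this]
        exact ⟨h2 ▸ hS.2, h2⟩
      · rintro ⟨_, h2⟩ k
        have h3 : k ∈ S ↔ (y k).isSome := by rw [← h2]; simp
        by_cases hk : k ∈ S
        · obtain ⟨l, hl⟩ := Option.isSome_iff_exists.1 (h3.1 hk)
          simp [hk, hl]
        · have : y k = none := by
            rw [← Option.not_isSome_iff_eq_none]; exact fun h => hk (h3.2 h)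
          simp [hk, this]
    · intro y _
      rw [tau, tprod_eq_prod_single, ← Finset.prod_mul_distrib]
      refine Finset.prod_congr rfl fun k _ => ?_
      simp only [γ]
      cases y k with
      | none => simp [mon_zero]
      | some l => simp
  change esym F A n i (mon A a (ws n)) ∈ R
  rw [key]
  refine sum_equivariant_mem F A a R _ (fun σ y k => y (σ k)) ?_ γ ?_ C ?_ ?_ ?_ ?_
  · intro σ y; simp
  · intro σ y; rfl
  · intro y hy σ
    simp only [Finset.mem_filter, Finset.mem_univ, true_and, supp] at hy ⊢
    rw [← hy]
    refine Finset.card_bij (fun k _ => σ k) ?_ ?_ ?_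
    · intro k hk; simpa using hk
    · intro k _ l _ h; exact σ.injective h
    · intro k hk
      exact ⟨σ.symm k, by simpa using hk, by simp⟩
  · intro y _ σ
    exact Equiv.prod_comp σ (fun k => (y k).elim 1 E)
  · intro y _
    refine prod_mem fun k _ => ?_
    cases y k with
    | none => exact one_mem R
    | some l => exact hE l
  · intro y hy
    apply ih
    simp only [Finset.mem_filter, Finset.mem_univ, true_and] at hy
    have h1 : DG (γ y) = ∑ k ∈ supp y, dg (γ y k) := by
      rw [DG]
      symm
      refine Finset.sum_subset (Finset.subset_univ _) fun k _ hk => ?_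
      have : y k = none := by simpa [supp] using hk
      simp [γ, this, dg_zero]
    rw [h1, ← hy, ← smul_eq_mul, ← Finset.sum_const]
    refine Finset.sum_lt_sum_of_nonempty (Finset.card_pos.1 (by omega)) fun k hk => ?_
    obtain ⟨l, hl⟩ := Option.isSome_iff_exists.1 (Finset.mem_filter.1 hk).2
    simp only [γ, hl, Option.elim_some, ws, dg_add]
    have : ∀ q : ℕ, dg (Pi.single j q : Fin m → ℕ) = q := by intro q; simp [dg]
    rw [this, this]
    omega

/-- Number of nontrivial slots. -/
def nz (g : Fin n → Fin m → ℕ) : ℕ := (Finset.univ.filter fun k => g k ≠ 0).card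

lemma orb_card {Y : Type*} [DecidableEq Y] {g h : Fin n → Y} (hh : h ∈ orb g) (P : Y → Prop)
    [DecidablePred P] : (Finset.univ.filter fun k => P (h k)).card =
      (Finset.univ.filter fun k => P (g k)).card := by
  obtain ⟨σ, rfl⟩ := mem_orb.1 hh
  refine Finset.card_bij (fun k _ => σ k) ?_ ?_ ?_
  · intro k hk; simpa using hk
  · intro k _ l _ h; exact σ.injective h
  · intro k hk
    exact ⟨σ.symm k, by simpa using hk, by simp⟩

lemma orb_nz {g h : Fin n → Fin m → ℕ} (hh : h ∈ orb g) : nz h = nz g :=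
  orb_card hh (fun y => y ≠ 0)

lemma orb_DG {g h : Fin n → Fin m → ℕ} (hh : h ∈ orb g) : DG h = DG g := by
  obtain ⟨σ, rfl⟩ := mem_orb.1 hh
  exact Equiv.sum_comp σ (fun k => dg (g k))

lemma DG_add (g h : Fin n → Fin m → ℕ) : DG (g + h) = DG g + DG h := by
  simp [DG, dg_add, Finset.sum_add_distrib]

lemma support_add (u v : Fin n → Fin m → ℕ) :
    (Finset.univ.filter fun k => (u + v) k ≠ 0) =
      (Finset.univ.filter fun k => u k ≠ 0) ∪ (Finset.univ.filter fun k => v k ≠ 0) := by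
  ext k
  simp only [Finset.mem_filter, Finset.mem_univ, true_and, Finset.mem_union, Pi.add_apply, ne_eq,
    add_eq_zero]
  tauto

lemma disj_of_nz {u v : Fin n → Fin m → ℕ} (h : nz u + nz v ≤ nz (u + v)) (k : Fin n) :
    u k = 0 ∨ v k = 0 := by
  by_contra! hk
  rw [nz, nz, nz, support_add] at h
  have h1 := Finset.card_union_add_card_inter (Finset.univ.filter fun k => u k ≠ 0)
    (Finset.univ.filter fun k => v k ≠ 0)
  have h2 : 0 < ((Finset.univ.filter fun k => u k ≠ 0) ∩
    (Finset.univ.filter fun k => v k ≠ 0)).card :=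
    Finset.card_pos.2 ⟨k, by simp [hk.1, hk.2]⟩
  omega

lemma nz_add_of_disj {u v : Fin n → Fin m → ℕ} (h : ∀ k, u k = 0 ∨ v k = 0) :
    nz (u + v) = nz u + nz v := by
  rw [nz, nz, nz, support_add, Finset.card_union_of_disjoint]
  rw [Finset.disjoint_filter]
  intro k _ h1 h2
  have := h k
  tauto

lemma nz_add_le (u v : Fin n → Fin m → ℕ) : nz (u + v) ≤ nz u + nz v := by
  rw [nz, nz, nz, support_add]
  exact Finset.card_union_le _ _

lemma count_add_of_disj {u v : Fin n → Fin m → ℕ} (h : ∀ k, u k = 0 ∨ v k = 0)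
    (y : Fin m → ℕ) (hy : y ≠ 0) :
    (Finset.univ.filter fun k => (u + v) k = y).card =
      (Finset.univ.filter fun k => u k = y).card + (Finset.univ.filter fun k => v k = y).card := by
  rw [← Finset.card_union_of_disjoint]
  · congr 1
    ext k
    simp only [Finset.mem_filter, Finset.mem_univ, true_and, Finset.mem_union, Pi.add_apply]
    rcases h k with h | h
    · rw [h, zero_add]
      exact ⟨Or.inr, fun h => h.resolve_left (fun h => hy h.symm)⟩
    · rw [h, add_zero]
      exact ⟨Or.inl, fun h => h.resolve_right (fun h => hy h.symm)⟩
  · rw [Finset.disjoint_filter]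
    intro k _ h1 h2
    rcases h k with h | h
    · exact hy (h1.symm.trans h)
    · exact hy (h2.symm.trans h)

lemma count_zero (u : Fin n → Fin m → ℕ) :
    (Finset.univ.filter fun k => u k = 0).card + nz u = n := by
  have := Finset.card_filter_add_card_filter_not (s := (Finset.univ : Finset (Fin n)))
    (fun k => u k = 0)
  simpa [nz] using this

lemma add_mem_orb {g₁ g₂ u v : Fin n → Fin m → ℕ} (hg : ∀ k, g₁ k = 0 ∨ g₂ k = 0)
    (hu : u ∈ orb g₁) (hv : v ∈ orb g₂) (huv : ∀ k, u k = 0 ∨ v k = 0) :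
    u + v ∈ orb (g₁ + g₂) := by
  rw [mem_orb_iff]
  intro y
  by_cases hy : y = 0
  · subst hy
    have h1 := count_zero (u + v)
    have h2 := count_zero (g₁ + g₂)
    rw [nz_add_of_disj hg] at h2
    rw [nz_add_of_disj huv, orb_nz hu, orb_nz hv] at h1
    omega
  · rw [count_add_of_disj huv y hy, count_add_of_disj hg y hy, mem_orb_iff.1 hu, mem_orb_iff.1 hv]

lemma osum_split (R : Subalgebra F (⨂[F] _ : Fin n, A)) (g₁ g₂ : Fin n → Fin m → ℕ)
    (w : Fin m → ℕ) (hw : w ≠ 0)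
    (h₁ : ∀ k, g₁ k = 0 ∨ g₁ k = w) (h₂ : ∀ k, g₂ k ≠ w) (hg : ∀ k, g₁ k = 0 ∨ g₂ k = 0)
    (hR₁ : osum F A a g₁ ∈ R) (hR₂ : osum F A a g₂ ∈ R)
    (ih : ∀ h, DG h = DG (g₁ + g₂) → nz h < nz (g₁ + g₂) → osum F A a h ∈ R) :
    osum F A a (g₁ + g₂) ∈ R := by
  classical
  have hprod : osum F A a g₁ * osum F A a g₂ =
      ∑ p ∈ orb g₁ ×ˢ orb g₂, tau F A a (p.1 + p.2) := by
    rw [osum, osum, Finset.sum_mul_sum, Finset.sum_product]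
    simp only [tau_add]
  rw [← Finset.sum_filter_add_sum_filter_not _ (fun p => p.1 + p.2 ∈ orb (g₁ + g₂))] at hprod
  have hA : ∑ p ∈ orb g₁ ×ˢ orb g₂ with p.1 + p.2 ∈ orb (g₁ + g₂), tau F A a (p.1 + p.2) =
      osum F A a (g₁ + g₂) := by
    rw [osum]
    have key : ∀ u v, u ∈ orb g₁ → v ∈ orb g₂ → u + v ∈ orb (g₁ + g₂) →
        (u = fun k => if (u + v) k = w then w else 0) ∧
        (v = fun k => if (u + v) k = w then 0 else (u + v) k) := by
      intro u v hu hv huv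
      have hd : ∀ k, u k = 0 ∨ v k = 0 := by
        apply disj_of_nz
        rw [orb_nz hu, orb_nz hv, orb_nz huv, nz_add_of_disj hg]
      have hu' : ∀ k, u k = 0 ∨ u k = w := by
        obtain ⟨σ, rfl⟩ := mem_orb.1 hu
        exact fun k => h₁ (σ k)
      have hv' : ∀ k, v k ≠ w := by
        obtain ⟨σ, rfl⟩ := mem_orb.1 hv
        exact fun k => h₂ (σ k)
      constructor
      · funext k
        by_cases h0 : u k = 0
        · simp [h0, hv' k]
        · have h1 := (hd k).resolve_left h0
          have h2 := (hu' k).resolve_left h0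
          simp [h1, h2]
      · funext k
        by_cases h0 : u k = 0
        · simp [h0, hv' k]
        · have h1 := (hd k).resolve_left h0
          have h2 := (hu' k).resolve_left h0
          simp [h1, h2]
    refine Finset.sum_bij (fun p _ => p.1 + p.2) ?_ ?_ ?_ ?_
    · intro p hp; exact (Finset.mem_filter.1 hp).2
    · intro p hp q hq hpq
      simp only [Finset.mem_filter, Finset.mem_product] at hp hq
      have kp := key p.1 p.2 hp.1.1 hp.1.2 hp.2
      have kq := key q.1 q.2 hq.1.1 hq.1.2 hq.2
      rw [hpq] at kp
      exact Prod.ext (kp.1.trans kq.1.symm) (kp.2.trans kq.2.symm)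
    · intro h hh
      have hh' := hh
      obtain ⟨σ, rfl⟩ := mem_orb.1 hh
      refine ⟨(fun k => g₁ (σ k), fun k => g₂ (σ k)), ?_, rfl⟩
      simp only [Finset.mem_filter, Finset.mem_product]
      exact ⟨⟨mem_orb.2 ⟨σ, rfl⟩, mem_orb.2 ⟨σ, rfl⟩⟩, hh'⟩
    · intro p _; rfl
  have hB : ∑ p ∈ orb g₁ ×ˢ orb g₂ with ¬ (p.1 + p.2 ∈ orb (g₁ + g₂)), tau F A a (p.1 + p.2) ∈ R := by
    have := sum_equivariant_mem F A a R
      ((orb g₁ ×ˢ orb g₂).filter fun p => ¬ (p.1 + p.2 ∈ orb (g₁ + g₂)))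
      (fun σ p => (fun k => p.1 (σ k), fun k => p.2 (σ k))) (by intro σ p; simp)
      (fun p => p.1 + p.2) (by intro σ p; rfl) (fun _ => 1) ?_ (by intros; rfl)
      (fun _ _ => one_mem R) ?_
    · simpa using this
    · intro p hp σ
      simp only [Finset.mem_filter, Finset.mem_product] at hp ⊢
      refine ⟨⟨perm_mem_orb σ hp.1.1, perm_mem_orb σ hp.1.2⟩, fun h => hp.2 ?_⟩
      have := perm_mem_orb σ.symm h
      simpa [Pi.add_def] using this
    · intro p hp
      simp only [Finset.mem_filter, Finset.mem_product] at hp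
      apply ih
      · rw [DG_add, DG_add, orb_DG hp.1.1, orb_DG hp.1.2]
      · by_contra hlt
        apply hp.2
        refine add_mem_orb hg hp.1.1 hp.1.2 (disj_of_nz ?_)
        rw [nz_add_of_disj hg] at hlt
        rw [orb_nz hp.1.1, orb_nz hp.1.2]
        omega
  rw [hA] at hprod
  rw [eq_sub_of_add_eq hprod.symm]
  exact sub_mem (mul_mem hR₁ hR₂) hB

lemma osum_eq_esym (g : Fin n → Fin m → ℕ) (w : Fin m → ℕ) (hw : w ≠ 0)
    (hg : ∀ k, g k = 0 ∨ g k = w) : osum F A a g = esym F A n (nz g) (mon A a w) := by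
  classical
  rw [osum, esym]
  symm
  have hnz : ∀ S : Finset (Fin n), (Finset.univ.filter
      fun k => (if k ∈ S then w else 0 : Fin m → ℕ) ≠ 0) = S := by
    intro S; ext k; simp [hw]
  refine Finset.sum_bij (fun S _ k => if k ∈ S then w else 0) ?_ ?_ ?_ ?_
  · intro S hS
    have hS' := (Finset.mem_powersetCard.1 hS).2
    have hnzS : nz (fun k => if k ∈ S then w else 0) = nz g := by
      rw [nz, hnz, hS']
    have h1 := count_zero (fun k => if k ∈ S then w else 0)
    have h2 := count_zero g
    rw [mem_orb_iff]
    intro y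
    by_cases hy0 : y = 0
    · subst hy0; omega
    by_cases hyw : y = w
    · subst hyw
      have e1 : (Finset.univ.filter fun k => (if k ∈ S then y else 0) = y) =
          Finset.univ.filter fun k => (if k ∈ S then y else 0 : Fin m → ℕ) ≠ 0 := by
        ext k
        by_cases hk : k ∈ S <;> simp [hk, hw, Ne.symm hw]
      have e2 : (Finset.univ.filter fun k => g k = y) =
          Finset.univ.filter fun k => g k ≠ 0 := by
        ext k
        rcases hg k with hk | hk <;> simp [hk, hw, Ne.symm hw]
      rw [e1, e2]
      exact hnzS
    · rw [Finset.filter_false_of_mem, Finset.filter_false_of_mem]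
      · intro k _ h
        rcases hg k with hk | hk
        · exact hy0 (h.symm.trans hk)
        · exact hyw (h.symm.trans hk)
      · intro k _ h
        by_cases hk : k ∈ S
        · simp only [hk, if_true] at h; exact hyw h.symm
        · simp only [hk, if_false] at h; exact hy0 h.symm
  · intro S _ S' _ h
    rw [← hnz S, ← hnz S']
    ext k
    have this : (if k ∈ S then w else 0 : Fin m → ℕ) = (if k ∈ S' then w else 0) := congrFun h k
    rw [Finset.mem_filter, Finset.mem_filter, this]
  · intro h hh
    refine ⟨Finset.univ.filter fun k => h k ≠ 0, ?_, ?_⟩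
    · rw [Finset.mem_powersetCard]
      exact ⟨Finset.subset_univ _, orb_nz hh⟩
    · obtain ⟨σ, rfl⟩ := mem_orb.1 hh
      funext k
      rcases hg (σ k) with hk | hk <;> simp [hk, hw]
  · intro S _
    rw [tau]
    congr 1
    funext k
    by_cases hk : k ∈ S <;> simp [hk, mon_zero]

lemma osum_mem (R : Subalgebra F (⨂[F] _ : Fin n, A))
    (hR : ∀ (i : ℕ) (α : Fin m → ℕ), 1 ≤ i → i ≤ n → Finset.univ.gcd α = 1 →
      (∑ j, α j) ≤ max n (m * (n - 1)) → esym F A n i (mon A a α) ∈ R) :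
    ∀ (D z : ℕ) (g : Fin n → Fin m → ℕ), DG g = D → nz g = z → osum F A a g ∈ R := by
  classical
  intro D
  induction D using Nat.strong_induction_on with
  | _ D ihD =>
  intro z
  induction z using Nat.strong_induction_on with
  | _ z ihz =>
  intro g hD hz
  by_cases h0 : ∀ k, g k = 0
  · have : g = 0 := funext h0
    subst this
    have h1 : orb (0 : Fin n → Fin m → ℕ) = {0} := by
      ext h
      rw [mem_orb, Finset.mem_singleton]
      exact ⟨fun ⟨_, h⟩ => h, fun h => ⟨1, h⟩⟩
    rw [osum, h1, Finset.sum_singleton, tau]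
    simp only [Pi.zero_apply, mon_zero]
    exact one_mem R
  push Not at h0
  obtain ⟨k₀, hk₀⟩ := h0
  have hn : 1 ≤ n := by have := k₀.2; omega
  obtain ⟨w, hwk⟩ : ∃ w, g k₀ = w := ⟨_, rfl⟩
  have hw : w ≠ 0 := hwk ▸ hk₀
  by_cases hg : ∀ k, g k = 0 ∨ g k = w
  · rw [osum_eq_esym F A a g w hw hg]
    have hnz1 : 1 ≤ nz g := Finset.card_pos.2 ⟨k₀, by simp [hk₀]⟩
    have hnzn : nz g ≤ n := by have := count_zero g; omega
    by_cases hdeg : dg w ≤ max n (m * (n - 1))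
    · obtain ⟨j₀, hj₀⟩ : ∃ j, w j ≠ 0 := by
        by_contra! h; exact hw (funext h)
      obtain ⟨v, hv, hv1⟩ := Finset.extract_gcd (s := Finset.univ) w ⟨j₀, Finset.mem_univ _⟩
      have hd0 : Finset.univ.gcd w ≠ 0 := by
        intro h
        exact hj₀ (Finset.gcd_eq_zero_iff.1 h j₀ (Finset.mem_univ _))
      have hwv : w = (Finset.univ.gcd w) • v := by
        funext j
        simpa using hv j (Finset.mem_univ j)
      rw [hwv, mon_smul]
      apply esym_pow_mem
      intro i hi hi'
      refine hR i v hi hi' hv1 (le_trans ?_ hdeg)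
      refine Finset.sum_le_sum fun j _ => ?_
      rw [hv j (Finset.mem_univ j)]
      exact Nat.le_mul_of_pos_left _ (Nat.pos_of_ne_zero hd0)
    · obtain ⟨j, hj⟩ : ∃ j, n ≤ w j := by
        by_contra! h
        apply hdeg
        refine le_trans ?_ (le_max_right _ _)
        calc dg w ≤ ∑ _j : Fin m, (n - 1) := Finset.sum_le_sum fun j _ => by have := h j; omega
          _ = _ := by simp
      refine esym_reduce F A a R (nz g) hnz1 w j hj ?_ ?_
      · intro l hl hl'
        have h1 := hR l (Pi.single j 1) hl hl' ?_ ?_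
        · have h2 : mon A a (Pi.single j 1) = a j := by
            rw [mon, Finset.prod_eq_single j]
            · simp
            · intro b _ hb; simp [hb]
            · simp
          rwa [h2] at h1
        · have := Finset.gcd_dvd (f := (Pi.single j 1 : Fin m → ℕ)) (Finset.mem_univ j)
          simpa using this
        · simp
          omega
      · intro h hh
        refine ihD (DG h) ?_ _ h rfl rfl
        rw [← hD]
        refine lt_of_lt_of_eq hh ?_
        rw [DG, nz, ← smul_eq_mul, ← Finset.sum_const, Finset.sum_filter]
        refine Finset.sum_congr rfl fun k _ => ?_
        rcases hg k with hk | hk <;> simp [hk, hw, dg_zero]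
  · push Not at hg
    obtain ⟨k₁, hk₁, hk₁'⟩ := hg
    let g₁ : Fin n → Fin m → ℕ := fun k => if g k = w then w else 0
    let g₂ : Fin n → Fin m → ℕ := fun k => if g k = w then 0 else g k
    have hsum : g = g₁ + g₂ := by
      funext k
      by_cases hk : g k = w <;> simp [g₁, g₂, hk]
    have hDG : DG g = DG g₁ + DG g₂ := by rw [← DG_add, ← hsum]
    have hp₁ : 0 < DG g₁ := by
      refine Finset.sum_pos' (fun _ _ => Nat.zero_le _) ⟨k₀, Finset.mem_univ _, ?_⟩
      simp only [g₁, hwk, if_true]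
      exact dg_pos hw
    have hp₂ : 0 < DG g₂ := by
      refine Finset.sum_pos' (fun _ _ => Nat.zero_le _) ⟨k₁, Finset.mem_univ _, ?_⟩
      simp only [g₂, hk₁', if_false]
      exact dg_pos hk₁
    have := osum_split F A a R g₁ g₂ w hw ?_ ?_ ?_ (ihD _ (by omega) _ g₁ rfl rfl)
      (ihD _ (by omega) _ g₂ rfl rfl) ?_
    · rwa [← hsum] at this
    · intro k; by_cases hk : g k = w <;> simp [g₁, hk]
    · intro k
      by_cases hk : g k = w
      · simp [g₂, hk, Ne.symm hw]
      · simp [g₂, hk]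
    · intro k; by_cases hk : g k = w <;> simp [g₁, g₂, hk]
    · intro h hh1 hh2
      rw [← hsum] at hh1 hh2
      exact ihz (nz h) (by omega) h (by omega) rfl

lemma exists_mon_expansion (ha : Algebra.adjoin F (Set.range a) = ⊤) (K : ℕ) (b : Fin K → A) :
    ∃ (s : Finset (Fin m → ℕ)) (B : Fin K → (Fin m → ℕ) → F),
      ∀ j, b j = ∑ α ∈ s, B j α • mon A a α := by
  classical
  have hsurj : ∀ x : A, ∃ p : MvPolynomial (Fin m) F, MvPolynomial.aeval a p = x := by
    intro x
    have : x ∈ Algebra.adjoin F (Set.range a) := by rw [ha]; trivial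
    rw [Algebra.adjoin_range_eq_range_aeval] at this
    exact this
  choose p hp using fun j => hsurj (b j)
  let s : Finset (Fin m →₀ ℕ) := Finset.univ.biUnion fun j => (p j).support
  refine ⟨s.map ⟨fun α : Fin m →₀ ℕ => (α : Fin m → ℕ), DFunLike.coe_injective⟩,
    fun j α => (p j).coeff (Finsupp.equivFunOnFinite.symm α), fun j => ?_⟩
  rw [Finset.sum_map]
  simp only [Function.Embedding.coeFn_mk, Finsupp.equivFunOnFinite_symm_coe]
  rw [← hp j, MvPolynomial.aeval_def, MvPolynomial.eval₂_eq']
  rw [← Finset.sum_subset (Finset.subset_biUnion_of_mem (fun j => (p j).support)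
    (Finset.mem_univ j))]
  · refine Finset.sum_congr rfl fun α _ => ?_
    rw [Algebra.smul_def]; rfl
  · intro α _ hα
    rw [MvPolynomial.notMem_support_iff.1 hα, zero_smul]

end Comb

/-- **Generators of symmetric tensors.** If the flat commutative `F`-algebra `A` is generated
by `a_1, …, a_m`, then `TS^n_F(A)` is generated as an `F`-algebra by the elements
`e_i^n(a)` (`1 ≤ i ≤ n`), `a` ranging over monomials in the `a_j` with coprime exponents
and total degree at most `max n (m * (n-1))`. -/
theorem ts_generated_by_esym_monomials [Module.Flat F A] (m : ℕ) (a : Fin m → A)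
    (ha : Algebra.adjoin F (Set.range a) = ⊤) :
    Algebra.adjoin F
        {x : ⨂[F] _ : Fin n, A |
          ∃ (i : ℕ) (α : Fin m → ℕ),
            1 ≤ i ∧ i ≤ n ∧ Finset.univ.gcd α = 1 ∧
            (∑ j, α j) ≤ max n (m * (n - 1)) ∧
            x = esym F A n i (∏ j, a j ^ α j)}
      = TS F A n := by
  classical
  apply le_antisymm
  · refine Algebra.adjoin_le ?_
    rintro _ ⟨i, α, _, _, _, _, rfl⟩
    exact esym_mem F A n i _
  · intro x hx
    obtain ⟨K, b, c, hc, hxc⟩ := exists_symm_expansion F A n x hx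
    obtain ⟨s, B, hB⟩ := exists_mon_expansion F A a ha K b
    set R := Algebra.adjoin F
        {x : ⨂[F] _ : Fin n, A |
          ∃ (i : ℕ) (α : Fin m → ℕ),
            1 ≤ i ∧ i ≤ n ∧ Finset.univ.gcd α = 1 ∧
            (∑ j, α j) ≤ max n (m * (n - 1)) ∧
            x = esym F A n i (∏ j, a j ^ α j)} with hRdef
    have hosum : ∀ g : Fin n → Fin m → ℕ, osum F A a g ∈ R := fun g =>
      osum_mem F A a R (fun i α h1 h2 h3 h4 =>
        Algebra.subset_adjoin ⟨i, α, h1, h2, h3, h4, rfl⟩) _ _ g rfl rfl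
    have hx2 : x = ∑ h ∈ Fintype.piFinset (fun _ : Fin n => s),
        algebraMap F _ (∑ g, c g * ∏ k, B (g k) (h k)) * tau F A a h := by
      rw [hxc]
      simp only [hB, MultilinearMap.map_sum_finset, MultilinearMap.map_smul_univ, Finset.smul_sum,
        ← Algebra.smul_def, Finset.sum_smul, mul_smul]
      rw [Finset.sum_comm]
      rfl
    rw [hx2]
    refine sum_stable_mem F A a R _ _ _ le_rfl ?_ ?_ ?_ ?_
    · intro h hh σ
      rw [Fintype.mem_piFinset] at hh ⊢
      exact fun k => hh (σ k)
    · intro h _ σ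
      congr 1
      refine Fintype.sum_equiv (Equiv.arrowCongr σ (Equiv.refl (Fin K))) _ _ ?_
      intro f
      have h1 := hc σ.symm f
      have h2 : c ((Equiv.arrowCongr σ (Equiv.refl (Fin K))) f) = c f := h1
      rw [h2]
      simp only [Equiv.arrowCongr_apply, Function.comp_def, Equiv.refl_apply]
      rw [← Equiv.prod_comp σ (fun x => B (f (σ.symm x)) (h x))]
      simp
    · intro h _
      exact Subalgebra.algebraMap_mem R _
    · intro h _
      exact hosum h

end SymmetricProduct
end

section
/- Let F be an infinite field and n a natural number. Consider the polynomial algebra F[x_{ij} : 1 ≤ i,j ≤ n] (the coordinate ring of the space Mat_n(F) of n×n matrices), on which GL_n(F) acts by F-algebra automorphisms through conjugation of the generic matrix (g · f is the polynomial obtained from f by the linear substitution replacing the matrix of variables X = (x_{ij}) by g^{−1} X g). Then the invariant subalgebra F[x_{ij}]^{GL_n(F)} is isomorphic as an F-algebra to the algebra F[y_1, …, y_n]^{S_n} of symmetric polynomials in n variables, the isomorphism being induced by restriction to diagonal matrices (the substitution x_{ii} ↦ y_i, x_{ij} ↦ 0 for i ≠ j). -/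
universe u

namespace SymmetricProduct

variable (F : Type u) [CommRing F]

/-- The subalgebra of elements fixed by a family of algebra endomorphisms. -/
def fixedSubalgebra {V : Type*} [CommRing V] [Algebra F V] {G : Type*}
    (σ : G → (V →ₐ[F] V)) : Subalgebra F V where
  carrier := {v | ∀ g : G, σ g v = v}
  mul_mem' := fun hx hy g => by rw [_root_.map_mul, hx g, hy g]
  add_mem' := fun hx hy g => by rw [_root_.map_add, hx g, hy g]
  one_mem' := fun g => map_one _
  algebraMap_mem' := fun r g => AlgHom.commutes _ r

variable (n : ℕ)

/-- The action of `GL_n(F)` on the coordinate ring `F[x_{ij}]` of `Mat_n`, by conjugation of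
the generic matrix: `g · f` is obtained from `f` by substituting `X ↦ g⁻¹ X g`. -/
noncomputable def conjAct (g : GL (Fin n) F) :
    MvPolynomial (Fin n × Fin n) F →ₐ[F] MvPolynomial (Fin n × Fin n) F :=
  MvPolynomial.aeval (fun p : Fin n × Fin n =>
    ∑ k : Fin n, ∑ l : Fin n,
      MvPolynomial.C (((g⁻¹ : GL (Fin n) F) : Matrix (Fin n) (Fin n) F) p.1 k
          * (g : Matrix (Fin n) (Fin n) F) l p.2) * MvPolynomial.X (k, l))

/-- Restriction to diagonal matrices: the substitution `x_{ii} ↦ y_i`, `x_{ij} ↦ 0` for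
`i ≠ j`. -/
noncomputable def restrictDiag :
    MvPolynomial (Fin n × Fin n) F →ₐ[F] MvPolynomial (Fin n) F :=
  MvPolynomial.aeval (fun p : Fin n × Fin n =>
    if p.1 = p.2 then MvPolynomial.X p.1 else 0)

section Helpers

open MvPolynomial

lemma aeval_conjAct {F : Type u} [Field F] {n : ℕ} (g : GL (Fin n) F)
    (A : Matrix (Fin n) (Fin n) F) (f : MvPolynomial (Fin n × Fin n) F) :
    aeval (fun p : Fin n × Fin n => A p.1 p.2) (conjAct F n g f) =
      aeval (fun p : Fin n × Fin n =>
        (((g⁻¹ : GL (Fin n) F) : Matrix (Fin n) (Fin n) F) * A * g.1) p.1 p.2) f := by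
  rw [conjAct, ← AlgHom.comp_apply]
  congr 1
  ext p
  simp only [AlgHom.comp_apply, aeval_X, map_sum, map_mul, algHom_C, Matrix.mul_apply,
    Finset.sum_mul]
  rw [Finset.sum_comm]
  refine Finset.sum_congr rfl fun k _ => Finset.sum_congr rfl fun l _ => ?_
  simp
  ring

/-- Invariants satisfy `f (A B) = f (B A)` over every commutative `F`-algebra. -/
lemma aeval_mul_comm {F : Type u} [Field F] [Infinite F] {n : ℕ}
    {f : MvPolynomial (Fin n × Fin n) F} (hf : f ∈ fixedSubalgebra F (conjAct F n))
    {R : Type*} [CommRing R] [Algebra F R] (A B : Matrix (Fin n) (Fin n) R) :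
    aeval (fun p : Fin n × Fin n => (A * B) p.1 p.2) f =
      aeval (fun p : Fin n × Fin n => (B * A) p.1 p.2) f := by
  -- the generic pair of matrices
  let S := MvPolynomial ((Fin n × Fin n) ⊕ (Fin n × Fin n)) F
  let P : Matrix (Fin n) (Fin n) S := Matrix.of fun i j => X (Sum.inl (i, j))
  let Q : Matrix (Fin n) (Fin n) S := Matrix.of fun i j => X (Sum.inr (i, j))
  have key : ∀ {T : Type _} [CommRing T] [Algebra F T] (φ : S →ₐ[F] T)
      (M N : Matrix (Fin n) (Fin n) S),
      φ (aeval (fun p : Fin n × Fin n => (M * N) p.1 p.2) f) =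
        aeval (fun p : Fin n × Fin n => (φ.mapMatrix M * φ.mapMatrix N) p.1 p.2) f := by
    intro T _ _ φ M N
    rw [← map_mul, ← AlgHom.comp_apply]
    congr 1
    ext p
    simp
  have key' : ∀ {T : Type _} [CommRing T] [Algebra F T] (φ : S →ₐ[F] T)
      (M N : Matrix (Fin n) (Fin n) S),
      φ (aeval (fun p : Fin n × Fin n => (M * N) p.1 p.2) f) =
        aeval (fun p : Fin n × Fin n => (φ.mapMatrix M * φ.mapMatrix N) p.1 p.2) f := by
    intro T _ _ φ M N
    rw [← map_mul, ← AlgHom.comp_apply]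
    congr 1
    ext p
    simp
  have hdet : P.det ≠ 0 := by
    intro h
    have h1 := congrArg (aeval (Sum.elim (fun p : Fin n × Fin n => (1 : Matrix (Fin n) (Fin n) F) p.1 p.2)
      (fun _ => (0 : F)))) h
    rw [AlgHom.map_det, map_zero] at h1
    have h2 : (aeval (Sum.elim (fun p : Fin n × Fin n => (1 : Matrix (Fin n) (Fin n) F) p.1 p.2)
      (fun _ => (0 : F)))).mapMatrix P = 1 := by
      ext i j
      simp [P]
    rw [h2, Matrix.det_one] at h1
    exact one_ne_zero h1
  have hgen : aeval (fun p : Fin n × Fin n => (P * Q) p.1 p.2) f =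
      aeval (fun p : Fin n × Fin n => (Q * P) p.1 p.2) f := by
    have hz : P.det * (aeval (fun p : Fin n × Fin n => (P * Q) p.1 p.2) f -
        aeval (fun p : Fin n × Fin n => (Q * P) p.1 p.2) f) = 0 := by
      apply MvPolynomial.funext
      intro x
      rw [← coe_aeval_eq_eval, map_zero]
      simp only [RingHom.coe_coe]
      rw [map_mul, map_sub, key, key, AlgHom.map_det]
      set p := (aeval x : S →ₐ[F] F).mapMatrix P
      set q := (aeval x : S →ₐ[F] F).mapMatrix Q
      by_cases hp : p.det = 0
      · rw [hp, zero_mul]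
      · let g : GL (Fin n) F := Matrix.GeneralLinearGroup.mkOfDetNeZero p hp
        have hg : (g : Matrix (Fin n) (Fin n) F) = p := rfl
        have h1 := aeval_conjAct g (p * q) f
        rw [hf g, ← hg, ← mul_assoc, ← Units.val_mul, inv_mul_cancel, Units.val_one, one_mul] at h1
        rw [← hg, h1, sub_self, mul_zero]
    exact sub_eq_zero.mp ((mul_eq_zero.mp hz).resolve_left hdet)
  let φ : S →ₐ[F] R := aeval (Sum.elim (fun p : Fin n × Fin n => A p.1 p.2)
      (fun p : Fin n × Fin n => B p.1 p.2))
  have hP : φ.mapMatrix P = A := by ext i j; exact (aeval_X _ _).trans rfl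
  have hQ : φ.mapMatrix Q = B := by ext i j; exact (aeval_X _ _).trans rfl
  have h := congrArg φ hgen
  rw [key', key', hP, hQ] at h
  exact h

lemma restrictDiag_eq {F : Type u} [Field F] {n : ℕ} (f : MvPolynomial (Fin n × Fin n) F)
    {R : Type*} [CommRing R] [Algebra F R] (d : Fin n → R) :
    aeval d (restrictDiag F n f) =
      aeval (fun p : Fin n × Fin n => (Matrix.diagonal d) p.1 p.2) f := by
  rw [restrictDiag, ← AlgHom.comp_apply]
  congr 1
  ext p
  simp only [AlgHom.comp_apply, aeval_X, Matrix.diagonal_apply]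
  split_ifs <;> simp

lemma restrictDiag_symm {F : Type u} [Field F] [Infinite F] {n : ℕ}
    {f : MvPolynomial (Fin n × Fin n) F} (hf : f ∈ fixedSubalgebra F (conjAct F n)) :
    (restrictDiag F n f).IsSymmetric := by
  intro σ
  have h1 : rename σ (restrictDiag F n f) =
      aeval (fun i => (X (σ i) : MvPolynomial (Fin n) F)) (restrictDiag F n f) := by
    rw [← aeval_X_left_apply (rename σ (restrictDiag F n f)), aeval_rename]
    rfl
  have h2 : restrictDiag F n f =
      aeval (fun i => (X i : MvPolynomial (Fin n) F)) (restrictDiag F n f) := by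
    rw [aeval_X_left_apply]
  rw [h1]
  conv_rhs => rw [h2]
  rw [restrictDiag_eq, restrictDiag_eq]
  have h := aeval_mul_comm hf
    ((Matrix.diagonal (fun i => (X i : MvPolynomial (Fin n) F))).submatrix id σ)
    ((1 : Matrix (Fin n) (Fin n) (MvPolynomial (Fin n) F)).submatrix σ id)
  rw [Matrix.submatrix_mul_equiv, mul_one] at h
  have e : ((1 : Matrix (Fin n) (Fin n) (MvPolynomial (Fin n) F)).submatrix σ id) *
      ((Matrix.diagonal (fun i => (X i : MvPolynomial (Fin n) F))).submatrix id σ) =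
      Matrix.diagonal (fun i => (X (σ i) : MvPolynomial (Fin n) F)) := by
    rw [← Matrix.submatrix_mul _ _ _ _ _ Function.bijective_id, one_mul,
      Matrix.submatrix_diagonal_equiv]
    rfl
  rw [e] at h
  rw [← h]
  rfl

/-- Coefficients of the generic characteristic polynomial are invariant. -/
lemma coeff_mem {F : Type u} [Field F] {n : ℕ} (k : ℕ) :
    (Matrix.charpoly.univ F (Fin n)).coeff k ∈ fixedSubalgebra F (conjAct F n) := by
  intro g
  have h := Polynomial.coeff_map (p := Matrix.charpoly.univ F (Fin n))
    (conjAct F n g : MvPolynomial (Fin n × Fin n) F →+* MvPolynomial (Fin n × Fin n) F) k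
  rw [RingHom.coe_coe] at h
  rw [← h, Matrix.charpoly.univ, ← Matrix.charpoly_map]
  let G : GL (Fin n) (MvPolynomial (Fin n × Fin n) F) := Matrix.GeneralLinearGroup.map C g
  have e : (Matrix.mvPolynomialX (Fin n) (Fin n) F).map
      (conjAct F n g : MvPolynomial (Fin n × Fin n) F →+* MvPolynomial (Fin n × Fin n) F) =
      (G⁻¹).val * Matrix.mvPolynomialX (Fin n) (Fin n) F * G.val := by
    ext1 i j
    simp only [Matrix.map_apply, Matrix.mvPolynomialX_apply, RingHom.coe_coe, conjAct, aeval_X,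
      Matrix.mul_apply, Finset.sum_mul]
    rw [Finset.sum_comm]
    refine Finset.sum_congr rfl fun k _ => Finset.sum_congr rfl fun l _ => ?_
    have e1 : G⁻¹ = Matrix.GeneralLinearGroup.map C g⁻¹ := (map_inv _ _).symm
    rw [e1]
    simp only [G, Matrix.GeneralLinearGroup.map_apply, map_mul]
    ring
  rw [e, Matrix.coe_units_inv, Matrix.charpoly_units_conj']

lemma restrictDiag_coeff {F : Type u} [Field F] {n : ℕ} (i : ℕ) (hi : i ≤ n) :
    restrictDiag F n ((-1) ^ i * (Matrix.charpoly.univ F (Fin n)).coeff (n - i)) =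
      esymm (Fin n) F i := by
  rw [← aeval_X_left_apply (restrictDiag F n _), restrictDiag_eq, map_mul, map_pow, map_neg,
    map_one]
  have h := Matrix.charpoly.univ_coeff_eval₂Hom (Fin n) (algebraMap F (MvPolynomial (Fin n) F))
    (fun p : Fin n × Fin n =>
      (Matrix.diagonal (fun i => (X i : MvPolynomial (Fin n) F))) p.1 p.2) (n - i)
  have h' : (Matrix.of (Function.curry (fun p : Fin n × Fin n =>
      (Matrix.diagonal (fun i => (X i : MvPolynomial (Fin n) F))) p.1 p.2))) =
      Matrix.diagonal (fun i => (X i : MvPolynomial (Fin n) F)) := rfl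
  rw [h', Matrix.charpoly_diagonal] at h
  rw [aeval_def, ← coe_eval₂Hom, h]
  have h3 := Multiset.prod_X_sub_C_coeff
    ((Finset.univ : Finset (Fin n)).val.map (fun i => (X i : MvPolynomial (Fin n) F)))
    (k := n - i) (by simp)
  rw [Multiset.map_map] at h3
  simp only [Multiset.card_map, Finset.card_val, Finset.card_univ, Fintype.card_fin] at h3
  rw [Nat.sub_sub_self hi, ← aeval_esymm_eq_multiset_esymm (Fin n) F, aeval_X_left_apply] at h3
  have h4 : (∏ i : Fin n, (Polynomial.X - Polynomial.C (X i : MvPolynomial (Fin n) F))).coeff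
      (n - i) = (-1) ^ i * esymm (Fin n) F i := h3
  rw [h4, ← mul_assoc, ← mul_pow]
  simp

lemma separable_iff {R L : Type*} [CommRing R] [Nontrivial R] [Field L] (φ : R →+* L)
    {χ : Polynomial R} (hχ : χ.Monic) :
    (χ.map φ).Separable ↔
      φ (Polynomial.resultant χ (Polynomial.derivative χ)) ≠ 0 := by
  rw [← Polynomial.resultant_map_map]
  have hd : χ.natDegree = (χ.map φ).natDegree := (hχ.natDegree_map φ).symm
  obtain ⟨k, hk⟩ := Nat.exists_eq_add_of_le
    (Polynomial.natDegree_map_le (f := φ) (p := Polynomial.derivative χ))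
  rw [hd, hk, Polynomial.resultant_add_right_deg _ _ _ _ _ le_rfl]
  have h1 := (hχ.map φ).coeff_natDegree
  rw [h1, one_pow, one_mul, Polynomial.separable_def, ← Polynomial.derivative_map,
    ← Polynomial.isUnit_resultant_iff_isCoprime (hχ.map φ), isUnit_iff_ne_zero]

lemma exists_diag {K : Type*} [Field K] [IsAlgClosed K] {n : ℕ}
    (M : Matrix (Fin n) (Fin n) K) (hM : M.charpoly.Separable) :
    ∃ (P : Matrix (Fin n) (Fin n) K) (d : Fin n → K), IsUnit P.det ∧
      M * P = P * Matrix.diagonal d := by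
  classical
  have hnd := Polynomial.nodup_roots hM
  have hc : M.charpoly.roots.toFinset.card = n := by
    rw [Multiset.toFinset_card_of_nodup hnd,
      ← (IsAlgClosed.splits M.charpoly).natDegree_eq_card_roots, Matrix.charpoly_natDegree_eq_dim,
      Fintype.card_fin]
  let e := (M.charpoly.roots.toFinset.equivFinOfCardEq hc).symm
  let d : Fin n → K := fun i => (e i : K)
  have hd : Function.Injective d := Subtype.val_injective.comp e.injective
  have hev : ∀ i, ∃ v, Module.End.HasEigenvector (Matrix.toLin' M) (d i) v := by
    intro i
    have h1 : d i ∈ M.charpoly.roots.toFinset := (e i).2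
    have h2 : M.charpoly.IsRoot (d i) := Polynomial.isRoot_of_mem_roots (by simpa using h1)
    have h3 : Module.End.HasEigenvalue (Matrix.toLin' M) (d i) := by
      rw [Module.End.hasEigenvalue_iff_isRoot_charpoly, Matrix.charpoly_toLin']
      exact h2
    exact h3.exists_hasEigenvector
  choose v hv using hev
  have hli := Module.End.eigenvectors_linearIndependent' _ d hd v hv
  refine ⟨(Matrix.of v).transpose, d, ?_, ?_⟩
  · rw [Matrix.det_transpose, ← Matrix.isUnit_iff_isUnit_det,
      ← Matrix.linearIndependent_rows_iff_isUnit]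
    exact hli
  · ext i j
    have h := congrFun (hv j).apply_eq_smul i
    rw [Matrix.toLin'_apply] at h
    rw [Matrix.mul_diagonal, Matrix.transpose_apply, Matrix.of_apply, mul_comm]
    exact h

lemma eq_zero_of_restrict {F : Type u} [Field F] [Infinite F] {n : ℕ}
    {f : MvPolynomial (Fin n × Fin n) F} (hf : f ∈ fixedSubalgebra F (conjAct F n))
    (h0 : restrictDiag F n f = 0) : f = 0 := by
  let R := MvPolynomial (Fin n × Fin n) F
  let K := AlgebraicClosure (FractionRing R)
  have hinj : Function.Injective (algebraMap R K) := by
    rw [IsScalarTower.algebraMap_eq R (FractionRing R) K]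
    exact (algebraMap (FractionRing R) K).injective.comp (IsFractionRing.injective R _)
  let M : Matrix (Fin n) (Fin n) K :=
    (Matrix.mvPolynomialX (Fin n) (Fin n) F).map (algebraMap R K)
  have hmon := Matrix.charpoly.univ_monic F (Fin n)
  have hsep : M.charpoly.Separable := by
    rw [Matrix.charpoly_map, separable_iff _ hmon]
    intro h
    rw [map_eq_zero_iff _ hinj] at h
    let a : Fin n → F := fun i => Infinite.natEmbedding F i
    have ha : Function.Injective a :=
      (Infinite.natEmbedding F).injective.comp Fin.val_injective
    have hs : ((Matrix.charpoly.univ F (Fin n)).map (eval₂Hom (RingHom.id F)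
        (fun p : Fin n × Fin n => Matrix.diagonal a p.1 p.2))).Separable := by
      rw [Matrix.charpoly.univ_map_eval₂Hom]
      have h' : (Matrix.of (Function.curry (fun p : Fin n × Fin n =>
        Matrix.diagonal a p.1 p.2))) = Matrix.diagonal a := rfl
      rw [h', Matrix.charpoly_diagonal]
      exact Polynomial.separable_prod_X_sub_C_iff.mpr ha
    rw [separable_iff _ hmon] at hs
    exact hs (by rw [h, map_zero])
  obtain ⟨P, d, hP, hMP⟩ := exists_diag M hsep
  have hM : M = P * (Matrix.diagonal d * P⁻¹) := by
    rw [← mul_assoc, ← hMP, mul_assoc, Matrix.mul_nonsing_inv _ hP, mul_one]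
  have h1 := aeval_mul_comm hf P (Matrix.diagonal d * P⁻¹)
  rw [← hM, mul_assoc, Matrix.nonsing_inv_mul _ hP, mul_one, ← restrictDiag_eq, h0, map_zero] at h1
  have h2 : aeval (fun p : Fin n × Fin n => M p.1 p.2) f = algebraMap R K f := by
    have : (aeval (fun p : Fin n × Fin n => M p.1 p.2) : R →ₐ[F] K) =
        IsScalarTower.toAlgHom F R K := by
      ext p
      simp [M]
      rfl
    rw [this]
    rfl
  rw [h2, map_eq_zero_iff _ hinj] at h1
  exact h1

end Helpers

/-- **Classical invariant theory of conjugation.** Over an infinite field `F`, restriction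
to diagonal matrices induces an `F`-algebra isomorphism from the conjugation invariants
`F[x_{ij}]^{GL_n(F)}` onto the algebra `F[y_1, …, y_n]^{S_n}` of symmetric polynomials. -/
theorem invariants_iso_symmetricPolynomials (F : Type u) [Field F] [Infinite F] (n : ℕ) :
    Subalgebra.map (restrictDiag F n) (fixedSubalgebra F (conjAct F n))
        = MvPolynomial.symmetricSubalgebra (Fin n) F ∧
      Set.InjOn (restrictDiag F n) (fixedSubalgebra F (conjAct F n)) := by
  refine ⟨le_antisymm ?_ ?_, ?_⟩
  · rintro _ ⟨f, hf, rfl⟩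
    exact restrictDiag_symm hf
  · intro p hp
    obtain ⟨q, hq⟩ := MvPolynomial.esymmAlgHom_surjective (σ := Fin n) F (n := n) (by simp) ⟨p, hp⟩
    have h := congrArg Subtype.val hq
    rw [MvPolynomial.esymmAlgHom_apply] at h
    change _ = p at h
    rw [← h]
    have hmem : ∀ i : Fin n, MvPolynomial.esymm (Fin n) F (i + 1) ∈
        Subalgebra.map (restrictDiag F n) (fixedSubalgebra F (conjAct F n)) := by
      intro i
      refine ⟨_, ?_, restrictDiag_coeff (i + 1) i.2⟩
      have h1 : (-1 : MvPolynomial (Fin n × Fin n) F) ∈ fixedSubalgebra F (conjAct F n) :=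
        neg_mem (one_mem _)
      exact (fixedSubalgebra F (conjAct F n)).mul_mem
        ((fixedSubalgebra F (conjAct F n)).pow_mem h1 _) (coeff_mem _)
    let c : Fin n → Subalgebra.map (restrictDiag F n) (fixedSubalgebra F (conjAct F n)) :=
      fun i => ⟨_, hmem i⟩
    have hc := MvPolynomial.comp_aeval_apply c
      (Subalgebra.map (restrictDiag F n) (fixedSubalgebra F (conjAct F n))).val q
    change _ = MvPolynomial.aeval (fun i : Fin n => MvPolynomial.esymm (Fin n) F (i + 1)) q at hc
    rw [← hc]
    exact (MvPolynomial.aeval c q).2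
  · intro f hf g hg hfg
    rw [← sub_eq_zero]
    exact eq_zero_of_restrict (sub_mem hf hg) (by rw [map_sub, hfg, sub_self])

end SymmetricProduct
end
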